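/- arXiv:1609.03820 — 4 statements merged into one kernel-verified Lean document; each statement's English description precedes it below -/
import Mathlib

section
/- Let n ≥ 1 and let M = (m_{ij}) be an irreducible n×n matrix with natural number entries. Let λ be a real number and x ∈ ℝ^n a vector with all coordinates x_i nonnegative, x ≠ 0, and M x = λ x (entries of M regarded as real numbers). Then for every index i one has n·λ^n·x_i ≥ x_1 + x_2 + ⋯ + x_n. -/
/-- An `n × n` matrix with natural number entries is *irreducible* if for all indices
`i, j` there exists `k ≥ 1` such that the `(i,j)` entry of `M ^ k` is nonzero. -/
def Matrix.NatIrreducible {n : ℕ} (M : Matrix (Fin n) (Fin n) ℕ) : Prop :=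
  ∀ i j : Fin n, ∃ k : ℕ, 1 ≤ k ∧ (M ^ k) i j ≠ 0

theorem natMat_pow_add_ne {n : ℕ} (M : Matrix (Fin n) (Fin n) ℕ) (a b : ℕ) (i j : Fin n) :
    (M ^ (a + b)) i j ≠ 0 ↔ ∃ v, (M ^ a) i v ≠ 0 ∧ (M ^ b) v j ≠ 0 := by
  rw [pow_add, Matrix.mul_apply, Ne, Finset.sum_eq_zero_iff]
  simp

theorem natMat_exists_le {n : ℕ} (M : Matrix (Fin n) (Fin n) ℕ) (i j : Fin n)
    (h : ∃ k : ℕ, 1 ≤ k ∧ (M ^ k) i j ≠ 0) :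
    ∃ k : ℕ, 1 ≤ k ∧ k ≤ n ∧ (M ^ k) i j ≠ 0 := by
  classical
  obtain ⟨h1, h2⟩ := Nat.find_spec h
  have hmin := fun m => Nat.find_min h (m := m)
  generalize Nat.find h = k at h1 h2 hmin
  refine ⟨k, h1, ?_, h2⟩
  by_contra! hk
  have hv : ∀ m : Fin k, ∃ v, (M ^ (m.1 + 1)) i v ≠ 0 ∧ (M ^ (k - (m.1 + 1))) v j ≠ 0 := by
    intro m
    rw [← natMat_pow_add_ne, Nat.add_sub_cancel' m.2]
    exact h2
  choose v hv1 hv2 using hv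
  have key : ∀ a b : Fin k, a < b → v a ≠ v b := by
    intro a b hab e
    have hab' : a.1 < b.1 := hab
    have hb := b.2
    refine hmin ((a.1 + 1) + (k - (b.1 + 1))) (by omega) ⟨by omega, ?_⟩
    rw [natMat_pow_add_ne]
    exact ⟨v a, hv1 a, e ▸ hv2 b⟩
  obtain ⟨a, b, hab, e⟩ := Fintype.exists_ne_map_eq_of_card_lt v (by simpa using hk)
  rcases lt_or_gt_of_ne hab with h | h
  · exact key a b h e
  · exact key b a h e.symm

theorem coord_lower_bound_of_nonneg_eigenvector (n : ℕ) (hn : 1 ≤ n)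
    (M : Matrix (Fin n) (Fin n) ℕ) (hM : M.NatIrreducible)
    (lam : ℝ) (x : Fin n → ℝ) (hx_nonneg : ∀ i, 0 ≤ x i) (hx : x ≠ 0)
    (heig : (M.map (fun a : ℕ => (a : ℝ))).mulVec x = lam • x) :
    ∀ i : Fin n, (∑ j, x j) ≤ (n : ℝ) * lam ^ n * x i := by
  have hE : ∀ i, ∑ j, (M i j : ℝ) * x j = lam * x i := by
    intro i
    have := congrFun heig i
    simpa [Matrix.mulVec, dotProduct] using this
  have hP : ∀ k : ℕ, ∀ i, ∑ j, ((M ^ k) i j : ℝ) * x j = lam ^ k * x i := by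
    intro k
    induction k with
    | zero => intro i; simp [Matrix.one_apply]
    | succ k ih =>
      intro i
      simp only [pow_succ M, Matrix.mul_apply, Nat.cast_sum, Nat.cast_mul, Finset.sum_mul]
      rw [Finset.sum_comm]
      simp only [mul_assoc, ← Finset.mul_sum, hE]
      simp only [mul_left_comm _ lam, ← Finset.mul_sum, ih]
      ring
  have hB : ∀ k i j, (M ^ k) i j ≠ 0 → x j ≤ lam ^ k * x i := by
    intro k i j h
    rw [← hP]
    have h1 : (1 : ℝ) ≤ ((M ^ k) i j : ℝ) := by exact_mod_cast Nat.one_le_iff_ne_zero.mpr h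
    calc x j ≤ ((M ^ k) i j : ℝ) * x j := le_mul_of_one_le_left (hx_nonneg j) h1
      _ ≤ _ := Finset.single_le_sum (f := fun j => ((M ^ k) i j : ℝ) * x j)
        (fun l _ => mul_nonneg (Nat.cast_nonneg _) (hx_nonneg l)) (Finset.mem_univ j)
  obtain ⟨p, hp⟩ := Function.ne_iff.mp hx
  have hp : 0 < x p := lt_of_le_of_ne (hx_nonneg p) (Ne.symm hp)
  have hl0 : 0 ≤ lam := by
    have : 0 ≤ lam * x p := by
      rw [← hE]
      exact Finset.sum_nonneg fun l _ => mul_nonneg (Nat.cast_nonneg _) (hx_nonneg l)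
    exact nonneg_of_mul_nonneg_left this hp
  have hl1 : 1 ≤ lam := by
    obtain ⟨k, hk, hne⟩ := hM p p
    by_contra! hlt
    have h1 := hB k p p hne
    have h2 : lam ^ k < 1 := pow_lt_one₀ hl0 hlt (by omega)
    nlinarith
  intro i
  have hj : ∀ j ∈ Finset.univ, x j ≤ lam ^ n * x i := by
    intro j _
    obtain ⟨k, _, hk, hne⟩ := natMat_exists_le M i j (hM i j)
    exact (hB k i j hne).trans
      (mul_le_mul_of_nonneg_right (pow_le_pow_right₀ hl1 hk) (hx_nonneg i))
  have := Finset.sum_le_card_nsmul _ _ _ hj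
  simpa [mul_assoc] using this
end

section
/- Let n ≥ 1 and let M = (m_{ij}) be an irreducible n×n matrix with natural number entries. Let λ be a real number and x ∈ ℝ^n a vector with all coordinates nonnegative, x ≠ 0, and M x = λ x (entries of M regarded as real numbers). Then ‖M‖ ≤ Σ_{i,j=1}^{n} m_{ij} ≤ n·λ^{n+1}, where ‖M‖ denotes the maximum entry of M and the sums and products are taken in the real numbers. -/
/-- The maximum entry of a matrix with natural number entries. -/
def Matrix.maxEntry {n : ℕ} (M : Matrix (Fin n) (Fin n) ℕ) : ℕ :=
  Finset.univ.sup fun p : Fin n × Fin n => M p.1 p.2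

theorem aux_pow {n : ℕ} (M : Matrix (Fin n) (Fin n) ℕ) (lam : ℝ) (x : Fin n → ℝ)
    (hl : 0 ≤ lam) (hedge : ∀ a b, M a b ≠ 0 → x b ≤ lam * x a) :
    ∀ (k : ℕ) (a b : Fin n), (M ^ k) a b ≠ 0 → x b ≤ lam ^ k * x a := by
  intro k
  induction k with
  | zero =>
    intro a b h
    have : a = b := by
      by_contra hab
      exact h (by simp [Matrix.one_apply, hab])
    simp [this]
  | succ k ih =>
    intro a b h
    rw [pow_succ, Matrix.mul_apply] at h
    obtain ⟨c, -, hc⟩ := Finset.exists_ne_zero_of_sum_ne_zero h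
    have h1 := ih a c (left_ne_zero_of_mul hc)
    have h2 := hedge c b (right_ne_zero_of_mul hc)
    calc x b ≤ lam * x c := h2
      _ ≤ lam * (lam ^ k * x a) := by gcongr
      _ = _ := by ring

theorem aux_exit {n : ℕ} (M : Matrix (Fin n) (Fin n) ℕ) (S : Finset (Fin n))
    (hS : ∀ a ∈ S, ∀ b, M a b ≠ 0 → b ∈ S) :
    ∀ (k : ℕ), ∀ a ∈ S, ∀ b, (M ^ k) a b ≠ 0 → b ∈ S := by
  intro k
  induction k with
  | zero =>
    intro a ha b h
    have : a = b := by
      by_contra hab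
      exact h (by simp [Matrix.one_apply, hab])
    exact this ▸ ha
  | succ k ih =>
    intro a ha b h
    rw [pow_succ, Matrix.mul_apply] at h
    obtain ⟨c, -, hc⟩ := Finset.exists_ne_zero_of_sum_ne_zero h
    exact hS c (ih a ha c (left_ne_zero_of_mul hc)) b (right_ne_zero_of_mul hc)

theorem sum_entries_le_n_mul_eigenvalue_pow (n : ℕ) (hn : 1 ≤ n)
    (M : Matrix (Fin n) (Fin n) ℕ) (hM : M.NatIrreducible)
    (lam : ℝ) (x : Fin n → ℝ) (hx_nonneg : ∀ i, 0 ≤ x i) (hx : x ≠ 0)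
    (heig : (M.map (fun a : ℕ => (a : ℝ))).mulVec x = lam • x) :
    (M.maxEntry : ℝ) ≤ (∑ i, ∑ j, (M i j : ℝ)) ∧
      (∑ i, ∑ j, (M i j : ℝ)) ≤ (n : ℝ) * lam ^ (n + 1) := by
  have hrow : ∀ i, ∑ j, (M i j : ℝ) * x j = lam * x i := by
    intro i
    have := congrFun heig i
    simpa [Matrix.mulVec, dotProduct] using this
  constructor
  · have : M.maxEntry ≤ ∑ i, ∑ j, M i j := by
      unfold Matrix.maxEntry
      apply Finset.sup_le
      rintro ⟨i, j⟩ -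
      calc M i j ≤ ∑ j, M i j :=
            Finset.single_le_sum (f := fun j => M i j) (fun _ _ => Nat.zero_le _)
              (Finset.mem_univ j)
        _ ≤ _ := Finset.single_le_sum (f := fun i => ∑ j, M i j) (fun _ _ => Nat.zero_le _)
              (Finset.mem_univ i)
    exact_mod_cast this
  · obtain ⟨p, hp⟩ : ∃ p, 0 < x p := by
      by_contra! h
      exact hx (funext fun i => le_antisymm (h i) (hx_nonneg i))
    have hl : 0 ≤ lam := by
      have h1 : 0 ≤ lam * x p := by
        rw [← hrow p]
        exact Finset.sum_nonneg fun j _ => mul_nonneg (Nat.cast_nonneg _) (hx_nonneg j)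
      exact nonneg_of_mul_nonneg_left h1 hp
    have hedge : ∀ a b, M a b ≠ 0 → x b ≤ lam * x a := by
      intro a b h
      rw [← hrow a]
      have h1 : (1 : ℝ) ≤ M a b := by exact_mod_cast Nat.one_le_iff_ne_zero.mpr h
      calc x b ≤ (M a b : ℝ) * x b := le_mul_of_one_le_left (hx_nonneg b) h1
        _ ≤ _ := Finset.single_le_sum (f := fun j => (M a j : ℝ) * x j)
          (fun j _ => mul_nonneg (Nat.cast_nonneg _) (hx_nonneg j)) (Finset.mem_univ b)
    have hpow := aux_pow M lam x hl hedge
    have hpos : ∀ i, 0 < x i := by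
      intro i
      obtain ⟨k, -, hk⟩ := hM i p
      have h := hpow k i p hk
      exact pos_of_mul_pos_right (hp.trans_le h) (by positivity)
    have hl1 : 1 ≤ lam := by
      obtain ⟨k, hk1, hk⟩ := hM p p
      have h := hpow k p p hk
      by_contra! hlt
      have := pow_lt_one₀ hl hlt (by omega : k ≠ 0)
      nlinarith
    obtain ⟨q, -, hq⟩ := Finset.exists_min_image Finset.univ x ⟨p, Finset.mem_univ p⟩
    have hq : ∀ i, x q ≤ x i := fun i => hq i (Finset.mem_univ i)
    let S : ℕ → Finset (Fin n) := fun k => Finset.univ.filter fun j => x j ≤ lam ^ k * x q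
    have hmem : ∀ k j, j ∈ S k ↔ x j ≤ lam ^ k * x q := by intro k j; simp [S]
    have hmono : ∀ k, S k ⊆ S (k + 1) := by
      intro k j hj
      rw [hmem] at *
      refine hj.trans (mul_le_mul_of_nonneg_right ?_ (hx_nonneg q))
      exact pow_le_pow_right₀ hl1 (by omega)
    have hcard : ∀ k, S k = Finset.univ ∨ k + 1 ≤ (S k).card := by
      intro k
      induction k with
      | zero =>
        right
        exact Finset.card_pos.mpr ⟨q, by rw [hmem]; simp⟩
      | succ k ih =>
        rcases ih with h | h
        · left
          exact Finset.univ_subset_iff.mp (h ▸ hmono k)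
        · by_cases hu : S k = Finset.univ
          · left
            exact Finset.univ_subset_iff.mp (hu ▸ hmono k)
          right
          have : ∃ a ∈ S k, ∃ b, M a b ≠ 0 ∧ b ∉ S k := by
            by_contra! hcon
            apply hu
            obtain ⟨a, ha⟩ := Finset.card_pos.mp (by omega : 0 < (S k).card)
            ext b
            simp only [Finset.mem_univ, iff_true]
            obtain ⟨l, -, hl⟩ := hM a b
            exact aux_exit M (S k) hcon l a ha b hl
          obtain ⟨a, ha, b, hab, hb⟩ := this
          have hlt : S k ⊂ S (k + 1) := by
            refine Finset.ssubset_iff_subset_ne.mpr ⟨hmono k, fun he => hb ?_⟩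
            rw [he, hmem]
            rw [hmem] at ha
            calc x b ≤ lam * x a := hedge a b hab
              _ ≤ lam * (lam ^ k * x q) := by gcongr
              _ = _ := by ring
          have := Finset.card_lt_card hlt
          omega
    have hall : ∀ i, x i ≤ lam ^ n * x q := by
      intro i
      rcases hcard n with h | h
      · rw [← hmem, h]; exact Finset.mem_univ i
      · have := Finset.card_le_univ (S n)
        simp at this
        omega
    have hrs : ∀ i, ∑ j, (M i j : ℝ) ≤ lam ^ (n + 1) := by
      intro i
      refine le_of_mul_le_mul_right ?_ (hpos q)
      calc (∑ j, (M i j : ℝ)) * x q = ∑ j, (M i j : ℝ) * x q := Finset.sum_mul ..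
        _ ≤ ∑ j, (M i j : ℝ) * x j :=
          Finset.sum_le_sum fun j _ => mul_le_mul_of_nonneg_left (hq j) (Nat.cast_nonneg _)
        _ = lam * x i := hrow i
        _ ≤ lam * (lam ^ n * x q) := mul_le_mul_of_nonneg_left (hall i) hl
        _ = _ := by ring
    calc (∑ i, ∑ j, (M i j : ℝ)) ≤ ∑ _i : Fin n, lam ^ (n + 1) :=
          Finset.sum_le_sum fun i _ => hrs i
      _ = _ := by simp
end

section
/- Let α be a finite type equipped with a map ι : α → α satisfying ι(ι(a)) = a and ι(a) ≠ a for all a ∈ α, and suppose the cardinality of α is 2s with s ≥ 1. Let f : α → List α satisfy f(ι(a)) = reverse(map ι (f(a))) for all a ∈ α, and extend f to F : List α → List α by F(w) = flatten(map f w). Suppose F is expanding: for every a ∈ α, the length of F^{[n]}([a]) (the n-fold iterate of F applied to the one-letter word [a]) tends to infinity as n → ∞. Then for every a ∈ α, the length of F^{[s]}([a]) is at least 2. -/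
open Filter

theorem expanding_map_length_ge_two (α : Type*) [Fintype α]
    (ι : α → α) (hinv : ∀ a, ι (ι a) = a) (hfix : ∀ a, ι a ≠ a)
    (s : ℕ) (hs : 1 ≤ s) (hcard : Fintype.card α = 2 * s)
    (f : α → List α) (hrev : ∀ a, f (ι a) = ((f a).map ι).reverse)
    (F : List α → List α) (hF : ∀ w, F w = (w.map f).flatten)
    (hexp : ∀ a : α, Tendsto (fun n => (F^[n] [a]).length) atTop atTop) :
    ∀ a : α, 2 ≤ (F^[s] [a]).length := by
  have hev : ∀ a, ∃ N, ∀ n, N ≤ n → 2 ≤ (F^[n] [a]).length := fun a =>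
    eventually_atTop.1 ((hexp a).eventually_ge_atTop 2)
  have hnil : F [] = [] := by simp [hF]
  -- no letter is periodic
  have hper : ∀ x p, 0 < p → F^[p] [x] ≠ [x] := by
    intro x p hp h
    obtain ⟨N, hN⟩ := hev x
    have h1 := hN (p * N) (Nat.le_mul_of_pos_left N hp)
    rw [Function.iterate_mul, Function.iterate_fixed h] at h1
    simp at h1
  -- no letter collapses
  have hne : ∀ a, f a ≠ [] := by
    intro a h
    obtain ⟨N, hN⟩ := hev a
    have h1 := hN (N + 1) (by omega)
    have h2 : F [a] = [] := by simp [hF, h]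
    rw [Function.iterate_succ_apply, h2, Function.iterate_fixed hnil] at h1
    simp at h1
  have hlen : ∀ w, w.length ≤ (F w).length := by
    intro w
    rw [hF]
    induction w with
    | nil => simp
    | cons b w ih =>
      have := List.length_pos_iff.2 (hne b)
      simp only [List.map_cons, List.flatten_cons, List.length_append, List.length_cons]
      omega
  have hmono : ∀ a, Monotone fun n => (F^[n] [a]).length := by
    intro a
    refine monotone_nat_of_le_succ fun n => ?_
    simp only [Function.iterate_succ_apply']
    exact hlen _
  have hFrev : ∀ w, F ((w.map ι).reverse) = ((F w).map ι).reverse := by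
    intro w
    simp only [hF]
    induction w with
    | nil => simp
    | cons b w ih =>
      simp only [List.map_cons, List.reverse_cons, List.map_append, List.flatten_append,
        List.flatten_cons, List.reverse_append, ih, hrev]
      simp
  have hFrevn : ∀ n w, F^[n] ((w.map ι).reverse) = ((F^[n] w).map ι).reverse := by
    intro n
    induction n with
    | zero => simp
    | succ n ih => intro w; simp only [Function.iterate_succ_apply, hFrev, ih]
  intro a
  by_contra hlt
  have hone : ∀ i : Fin (s + 1), ∃ x, F^[i.1] [a] = [x] := by
    intro i
    have h1 := hmono a (Nat.zero_le i.1)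
    have h2 := hmono a (Nat.le_of_lt_succ i.2)
    simp only [Function.iterate_zero, id, List.length_singleton] at h1 h2
    exact List.length_eq_one_iff.1 (by omega)
  choose e he using hone
  have hstep : ∀ i j : Fin (s + 1), i < j → F^[j.1 - i.1] [e i] = [e j] := by
    intro i j hij
    have h : i.1 < j.1 := hij
    rw [← he i, ← he j, ← Function.iterate_add_apply]
    congr 2
    omega
  have hA : ∀ i j, i < j → e i ≠ e j := by
    intro i j hij h
    have h1 := hstep i j hij
    rw [← h] at h1
    exact hper _ _ (Nat.sub_pos_of_lt hij) h1
  have hB : ∀ i j, i < j → e j ≠ ι (e i) := by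
    intro i j hij h
    have h1 := hstep i j hij
    have hp : 0 < j.1 - i.1 := Nat.sub_pos_of_lt hij
    rw [h] at h1
    have h2 := hFrevn (j.1 - i.1) [e i]
    rw [h1] at h2
    simp only [List.map_cons, List.map_nil, List.reverse_singleton, hinv] at h2
    refine hper (e i) ((j.1 - i.1) + (j.1 - i.1)) (by omega) ?_
    rw [Function.iterate_add_apply, h1, h2]
  have hinj : ∀ i j, e i = e j → i = j := by
    intro i j h
    rcases lt_trichotomy i j with h1 | h1 | h1
    · exact absurd h (hA i j h1)
    · exact h1
    · exact absurd h.symm (hA j i h1)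
  have hcross : ∀ i j, e i ≠ ι (e j) := by
    intro i j h
    rcases lt_trichotomy i j with h1 | h1 | h1
    · exact hB i j h1 (by rw [h, hinv])
    · subst h1
      exact hfix _ h.symm
    · exact hB j i h1 h
  have hI : Function.Injective (Sum.elim e (fun i => ι (e i))) := by
    rintro (i | i) (j | j) h
    · exact congrArg _ (hinj _ _ h)
    · exact absurd h (hcross _ _)
    · exact absurd h.symm (hcross _ _)
    · refine congrArg _ (hinj _ _ ?_)
      have h' : ι (e i) = ι (e j) := h
      rw [← hinv (e i), h', hinv]
  have hc := Fintype.card_le_of_injective _ hI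
  simp only [Fintype.card_sum, Fintype.card_fin] at hc
  omega
end

section
/- Let α be a finite type equipped with a map ι : α → α satisfying ι(ι(a)) = a and ι(a) ≠ a for all a ∈ α, and suppose the cardinality of α is 2s with s ≥ 1. Let f : α → List α satisfy f(ι(a)) = reverse(map ι (f(a))) for all a ∈ α, and extend f to F : List α → List α by F(w) = flatten(map f w). Suppose F is expanding: for every a ∈ α, the length of F^{[n]}([a]) tends to infinity as n → ∞. Then for every integer t ≥ 0 and every a ∈ α, the length of F^{[t·s]}([a]) is at least 2^t. -/
open Filter

theorem expanding_map_length_ge_two_pow (α : Type*) [Fintype α]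
    (ι : α → α) (hinv : ∀ a, ι (ι a) = a) (hfix : ∀ a, ι a ≠ a)
    (s : ℕ) (hs : 1 ≤ s) (hcard : Fintype.card α = 2 * s)
    (f : α → List α) (hrev : ∀ a, f (ι a) = ((f a).map ι).reverse)
    (F : List α → List α) (hF : ∀ w, F w = (w.map f).flatten)
    (hexp : ∀ a : α, Tendsto (fun n => (F^[n] [a]).length) atTop atTop) :
    ∀ (t : ℕ) (a : α), 2 ^ t ≤ (F^[t * s] [a]).length := by
  have happ : ∀ u v, F (u ++ v) = F u ++ F v := by
    intro u v; simp [hF]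
  have happn : ∀ n u v, F^[n] (u ++ v) = F^[n] u ++ F^[n] v := by
    intro n
    induction n with
    | zero => intro u v; rfl
    | succ n ih => intro u v; simp only [Function.iterate_succ_apply, happ, ih]
  have hnil : ∀ n, F^[n] [] = [] := by
    intro n
    induction n with
    | zero => rfl
    | succ n ih => rw [Function.iterate_succ_apply, hF]; simpa using ih
  have hsing : ∀ a, F [a] = f a := by intro a; simp [hF]
  have hr : ∀ w, F ((w.map ι).reverse) = ((F w).map ι).reverse := by
    intro w
    induction w with
    | nil => simp [hF]
    | cons a w ih =>
      have h1 : F (a :: w) = f a ++ F w := by simp [hF]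
      rw [h1, List.map_cons, List.reverse_cons, happ, ih, hsing, hrev]
      simp
  have hrn : ∀ n w, F^[n] ((w.map ι).reverse) = ((F^[n] w).map ι).reverse := by
    intro n
    induction n with
    | zero => intro w; rfl
    | succ n ih => intro w; simp only [Function.iterate_succ_apply, hr, ih]
  have hlen : ∀ n a, (F^[n] [ι a]).length = (F^[n] [a]).length := by
    intro n a
    have := congrArg List.length (hrn n [a])
    simpa using this
  have hne : ∀ a, 1 ≤ (f a).length := by
    intro a
    by_contra h
    have h0 : f a = [] := by
      apply List.eq_nil_of_length_eq_zero; omega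
    obtain ⟨N, hN⟩ := (tendsto_atTop_atTop.1 (hexp a)) 1
    have h2 := hN (N + 1) (by omega)
    rw [Function.iterate_succ_apply, hsing, h0, hnil] at h2
    simp at h2
  have hmono1 : ∀ w, w.length ≤ (F w).length := by
    intro w
    induction w with
    | nil => simp
    | cons a w ih =>
      have h1 : F (a :: w) = f a ++ F w := by simp [hF]
      have := hne a
      rw [h1, List.length_append, List.length_cons]; omega
  have hmono : ∀ a, Monotone (fun n => (F^[n] [a]).length) := by
    intro a
    apply monotone_nat_of_le_succ
    intro n
    simp only [Function.iterate_succ_apply']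
    exact hmono1 _
  have key : ∀ a, 2 ≤ (F^[s] [a]).length := by
    intro a
    by_contra h
    have hone : ∀ n, n ≤ s → ∃ b, F^[n] [a] = [b] := by
      intro n hn
      have h1 : (F^[n] [a]).length ≤ (F^[s] [a]).length := hmono a hn
      have h2 : (F^[0] [a]).length ≤ (F^[n] [a]).length := hmono a (Nat.zero_le n)
      simp only [Function.iterate_zero, id, List.length_singleton] at h2
      exact List.length_eq_one_iff.1 (by omega)
    have hone' : ∀ n : Fin (s + 1), ∃ b, F^[(n : ℕ)] [a] = [b] :=
      fun n => hone n (by omega)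
    choose b hb using hone'
    have hL : ∀ i n, (F^[n + (i : Fin (s + 1))] [a]).length = (F^[n] [b i]).length := by
      intro i n
      rw [Function.iterate_add_apply, hb]
    obtain ⟨x, y, hxy, hne'⟩ := Fintype.exists_ne_map_eq_of_card_lt
      (fun p : Fin (s + 1) × Bool => if p.2 then ι (b p.1) else b p.1)
      (by simp [hcard]; omega)
    have hij : ∃ i j : Fin (s + 1), i < j ∧
        ∀ n, (F^[n] [b i]).length = (F^[n] [b j]).length := by
      obtain ⟨i, c⟩ := x
      obtain ⟨j, d⟩ := y
      have hall : ∀ n, (F^[n] [b i]).length = (F^[n] [b j]).length := by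
        intro n
        have := congrArg (fun z => (F^[n] [z]).length) hne'
        cases c <;> cases d <;> simpa [hlen] using this
      rcases lt_trichotomy i j with hlt | heq | hgt
      · exact ⟨i, j, hlt, hall⟩
      · subst heq
        exfalso
        cases c <;> cases d <;> simp at hxy hne'
        · exact hfix _ hne'.symm
        · exact hfix _ hne'
      · exact ⟨j, i, hgt, fun n => (hall n).symm⟩
    obtain ⟨i, j, hlt, hall⟩ := hij
    have hlt' : (i : ℕ) < j := hlt
    have hper : ∀ k : ℕ, (F^[k * ((j : ℕ) - i) + i] [a]).length = 1 := by
      intro k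
      induction k with
      | zero => simp [hb]
      | succ k ih =>
        have e : (k + 1) * ((j : ℕ) - i) + i = k * ((j : ℕ) - i) + j := by
          rw [Nat.succ_mul]; omega
        rw [e, hL, ← hall, ← hL, ih]
    obtain ⟨N, hN⟩ := (tendsto_atTop_atTop.1 (hexp a)) 2
    have h3 := hN (N * ((j : ℕ) - i) + i) (by
      have : N * 1 ≤ N * ((j : ℕ) - i) := Nat.mul_le_mul_left _ (by omega)
      omega)
    rw [hper] at h3
    omega
  have key2 : ∀ w, 2 * w.length ≤ (F^[s] w).length := by
    intro w
    induction w with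
    | nil => simp
    | cons a w ih =>
      have h1 := happn s [a] w
      have := key a
      rw [List.singleton_append] at h1
      rw [h1, List.length_append, List.length_cons]; omega
  intro t a
  induction t with
  | zero => simp
  | succ t ih =>
    rw [Nat.succ_mul, Nat.add_comm (t * s) s, Function.iterate_add_apply, pow_succ]
    have := key2 (F^[t * s] [a])
    omega
end
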